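/- Let k be a field, G a bipartite graph on vertex set X ⊔ Y with X = {x_1,…,x_n} and Y = {y_1,…,y_m}, let I ⊆ k[X ⊔ Y] be the edge ideal of G, and let J be the edge ideal of the Ferrers graph H associated with G. Then for every subset X' ⊆ X and every i ≥ 0, the Z^n-graded Betti numbers satisfy β_{i,X',•}(I) ≥ β_{i,X',•}(J). -/

import Mathlib

open Finset

/-- An abstract simplicial complex on the vertex type `V`: a collection of
finite subsets of `V` (the *faces*) closed under taking subsets. -/
structure SimpComplex (V : Type*) where
  faces : Set (Finset V)
  down_closed : ∀ F ∈ faces, ∀ G ⊆ F, G ∈ faces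

namespace SimpComplex

variable {V : Type*}

/-- The induced subcomplex `Γ[W]` of `Γ` on a set `W` of vertices. -/
def induced (K : SimpComplex V) (W : Finset V) : SimpComplex V where
  faces := {F | F ∈ K.faces ∧ F ⊆ W}
  down_closed := fun F hF G hG => ⟨K.down_closed F hF.1 G hG, hG.trans hF.2⟩

/-- A simplicial complex is a cone with apex `v` if `v` belongs to every
maximal face. -/
def IsConeWithApex (K : SimpComplex V) (v : V) : Prop :=
  ∀ F ∈ K.faces, (∀ G ∈ K.faces, F ⊆ G → G = F) → v ∈ F

variable [LinearOrder V] [Fintype V] (k : Type*) [Field k]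

/-- The faces of cardinality `c` of a simplicial complex, as a type. -/
def Face (K : SimpComplex V) (c : ℕ) : Type _ :=
  {F : Finset V // F ∈ K.faces ∧ F.card = c}

/-- The space of simplicial chains with coefficients in `k` in (reduced)
homological degree `c - 1`; it has a basis indexed by the faces of
cardinality `c`. -/
abbrev Chains (K : SimpComplex V) (c : ℕ) : Type _ := Face K c → k

/-- The simplicial boundary map, from chains on faces of cardinality `c + 1`
to chains on faces of cardinality `c`, expressed in coordinates:  the
coefficient of a face `G` in `∂ x` is a signed sum of the coefficients of
`x` at the faces `G ∪ {v}`, with the usual signs determined by the linear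
order on the vertices. -/
noncomputable def boundary (K : SimpComplex V) (c : ℕ) :
    Chains k K (c + 1) →ₗ[k] Chains k K c where
  toFun x G := ∑ v ∈ (Finset.univ \ G.1).attach,
    letI := Classical.dec (insert v.1 G.1 ∈ K.faces)
    if h : insert v.1 G.1 ∈ K.faces then
      ((-1 : k) ^ (G.1.filter (fun w => w < v.1)).card) *
        x ⟨insert v.1 G.1, h, by
          have hv : v.1 ∉ G.1 := (Finset.mem_sdiff.mp v.2).2
          rw [Finset.card_insert_of_notMem hv, G.2.2]⟩
    else 0
  map_add' x y := by
    funext G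
    simp only [Pi.add_apply]
    rw [← Finset.sum_add_distrib]
    refine Finset.sum_congr rfl fun v _ => ?_
    split
    · exact mul_add _ (x _) (y _)
    · simp
  map_smul' a x := by
    funext G
    simp only [Pi.smul_apply, RingHom.id_apply, smul_eq_mul, Finset.mul_sum]
    refine Finset.sum_congr rfl fun v _ => ?_
    split
    · exact mul_left_comm _ a (x _)
    · simp

/-- The `j`-th reduced simplicial homology `H̃_j(K; k)` (for `j : ℕ`):
cycles supported on faces of cardinality `j + 1` modulo boundaries of chains on
faces of cardinality `j + 2`.  (Note that the empty set is a face of every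
nonvoid complex, so this is reduced homology.) -/
@[reducible] noncomputable def reducedHomology (K : SimpComplex V) (j : ℕ) : Type _ :=
  LinearMap.ker (boundary k K j) ⧸
    Submodule.comap (LinearMap.ker (boundary k K j)).subtype
      (LinearMap.range (boundary k K (j + 1)))

/-- The `j`-th reduced Betti number `β̃_j(K) = dim_k H̃_j(K; k)`. -/
noncomputable def reducedBetti (K : SimpComplex V) (j : ℕ) : ℕ :=
  Module.finrank k (reducedHomology k K j)

/-- Hochster's formula, used as the definition of the fine graded Betti numbers
(graded by squarefree multidegrees, i.e. by subsets `W` of the variables) of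
the squarefree monomial ideal `I_K` whose Stanley–Reisner complex is `K`:
`β_{i,W}(I_K) = dim_k H̃_{|W| - i - 2}(K[W]; k)`. -/
noncomputable def bettiFine (K : SimpComplex V) (i : ℕ) (W : Finset V) : ℕ :=
  if i + 2 ≤ W.card then reducedBetti k (K.induced W) (W.card - i - 2) else 0

/-- The total (ungraded) Betti number `β_i`, the sum of all the fine graded
Betti numbers. -/
noncomputable def totalBetti (K : SimpComplex V) (i : ℕ) : ℕ :=
  ∑ W : Finset V, bettiFine k K i W

end SimpComplex

open SimpComplex

/-- The vertex `x_i` of `X = {x_1, …, x_n}` inside `X ⊔ Y = Fin (n + m)`. -/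
def xVert {n m : ℕ} (i : Fin n) : Fin (n + m) := Fin.castAdd m i

/-- The vertex `y_j` of `Y = {y_1, …, y_m}` inside `X ⊔ Y = Fin (n + m)`. -/
def yVert {n m : ℕ} (j : Fin m) : Fin (n + m) := Fin.natAdd n j

/-- A bipartite graph `G` on `X ⊔ Y` is given by its edge set `E ⊆ X × Y`.
`nbr E i` is the neighborhood `N(x_i) ⊆ Y` of the vertex `x_i` in `G`. -/
def nbr {n m : ℕ} (E : Finset (Fin n × Fin m)) (i : Fin n) : Finset (Fin m) :=
  Finset.univ.filter fun j => (i, j) ∈ E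

/-- The degree `deg_G x_i = |N(x_i)|`. -/
def degG {n m : ℕ} (E : Finset (Fin n × Fin m)) (i : Fin n) : ℕ := (nbr E i).card

/-- The Ferrers graph `H` associated to the bipartite graph `E`: the vertex
`x_i` is joined to exactly `y_1, …, y_{deg_G x_i}`. -/
def ferrers {n m : ℕ} (E : Finset (Fin n × Fin m)) : Finset (Fin n × Fin m) :=
  Finset.univ.filter fun p => (p.2 : ℕ) < degG E p.1

/-- The independence complex of the bipartite graph `E` (faces are the subsets
of `X ⊔ Y` containing no edge), i.e. the Stanley–Reisner complex `Δ(I)` of the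
edge ideal `I` of `E`. -/
def indepComplex {n m : ℕ} (E : Finset (Fin n × Fin m)) : SimpComplex (Fin (n + m)) where
  faces := {F | ∀ p ∈ E, ¬(xVert p.1 ∈ F ∧ yVert p.2 ∈ F)}
  down_closed := fun _ hF _ hG p hp hc => hF p hp ⟨hG hc.1, hG hc.2⟩

/-- The subset `X' ⊔ Y'` of the vertex set `X ⊔ Y = Fin (n + m)`. -/
def vset {n m : ℕ} (X' : Finset (Fin n)) (Y' : Finset (Fin m)) : Finset (Fin (n + m)) :=
  X'.image xVert ∪ Y'.image yVert

/-- The `ℤ^n`-graded Betti number `β_{i,X',•}(I)` of the edge ideal `I` of the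
bipartite graph `E`, in the grading with `deg x_i = e_i` and `deg y_j = 0`:
it is the sum of the fine graded Betti numbers `β_{i, X' ⊔ Y'}(I)` over all
`Y' ⊆ Y`. -/
noncomputable def bettiCoarse (k : Type*) [Field k] {n m : ℕ}
    (E : Finset (Fin n × Fin m)) (i : ℕ) (X' : Finset (Fin n)) : ℕ :=
  ∑ Y' : Finset (Fin m), bettiFine k (indepComplex E) i (vset X' Y')

/-- The binomial coefficient `C(a, b)` with an integer lower argument, which is
zero when `b < 0`. -/
def chooseInt (a : ℕ) (b : ℤ) : ℕ := if 0 ≤ b then a.choose b.toNat else 0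

section LinearAlgebra

variable {k : Type*} [Field k]

/-- The dimension of the subquotient `Z / (Z ∩ B)`. -/
noncomputable def subquotientDim {M : Type*} [AddCommGroup M] [Module k M]
    (Z B : Submodule k M) : ℕ :=
  Module.finrank k (Z ⧸ B.comap Z.subtype)

theorem subquotientDim_eq_zero {M : Type*} [AddCommGroup M] [Module k M]
    {Z B : Submodule k M} (h : Z ≤ B) : subquotientDim Z B = 0 := by
  have : B.comap Z.subtype = ⊤ := by
    rw [Submodule.comap_subtype_eq_top]
    exact h
  unfold subquotientDim
  rw [this]
  exact Module.finrank_zero_of_subsingleton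

variable {M₁ M₂ M₃ : Type*} [AddCommGroup M₁] [Module k M₁] [AddCommGroup M₂] [Module k M₂]
  [AddCommGroup M₃] [Module k M₃] [Module.Finite k M₁] [Module.Finite k M₂] [Module.Finite k M₃]

/-- The dimension inequality coming from exactness in the middle of
`Z₁ / B₁ → Z₂ / B₂ → Z₃ / B₃`. -/
theorem subquotientDim_le_add {Z₁ B₁ : Submodule k M₁} {Z₂ B₂ : Submodule k M₂}
    {Z₃ B₃ : Submodule k M₃} (f : M₁ →ₗ[k] M₂) (g : M₂ →ₗ[k] M₃)
    (hfZ : ∀ z ∈ Z₁, f z ∈ Z₂) (hfB : ∀ z ∈ B₁, f z ∈ B₂)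
    (hgZ : ∀ z ∈ Z₂, g z ∈ Z₃) (hgB : ∀ z ∈ B₂, g z ∈ B₃)
    (hexact : ∀ z ∈ Z₂, g z ∈ B₃ → ∃ a ∈ Z₁, z - f a ∈ B₂) :
    subquotientDim Z₂ B₂ ≤ subquotientDim Z₁ B₁ + subquotientDim Z₃ B₃ := by
  let f' : (Z₁ ⧸ B₁.comap Z₁.subtype) →ₗ[k] (Z₂ ⧸ B₂.comap Z₂.subtype) :=
    Submodule.mapQ _ _ (f.restrict hfZ) fun z hz => hfB _ hz
  let g' : (Z₂ ⧸ B₂.comap Z₂.subtype) →ₗ[k] (Z₃ ⧸ B₃.comap Z₃.subtype) :=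
    Submodule.mapQ _ _ (g.restrict hgZ) fun z hz => hgB _ hz
  have hker : LinearMap.ker g' ≤ LinearMap.range f' := by
    intro z hz
    obtain ⟨z, rfl⟩ := Submodule.Quotient.mk_surjective _ z
    have hz' : g z ∈ B₃ := by
      have := (Submodule.Quotient.mk_eq_zero _).1 (show Submodule.Quotient.mk _ = _ from hz)
      exact this
    obtain ⟨a, ha, hab⟩ := hexact z z.2 hz'
    refine ⟨Submodule.Quotient.mk ⟨a, ha⟩, ?_⟩
    refine ((Submodule.Quotient.eq _).2 ?_).symm
    exact hab
  have h₁ := LinearMap.finrank_range_add_finrank_ker g'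
  have h₂ := Submodule.finrank_mono hker
  have h₃ := LinearMap.finrank_range_le f'
  have h₄ := Submodule.finrank_le (LinearMap.range g')
  unfold subquotientDim
  omega

theorem subquotientDim_le_of_surjective {Z₁ B₁ : Submodule k M₁} {Z₂ B₂ : Submodule k M₂}
    (f : M₁ →ₗ[k] M₂) (hfZ : ∀ z ∈ Z₁, f z ∈ Z₂) (hfB : ∀ z ∈ B₁, f z ∈ B₂)
    (hsurj : ∀ z ∈ Z₂, ∃ a ∈ Z₁, z - f a ∈ B₂) :
    subquotientDim Z₂ B₂ ≤ subquotientDim Z₁ B₁ := by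
  have h := subquotientDim_le_add (Z₃ := (⊥ : Submodule k M₂)) (B₃ := ⊥) f 0 hfZ hfB
    (by simp) (by simp) (fun z hz _ => hsurj z hz)
  have h₀ : subquotientDim (⊥ : Submodule k M₂) ⊥ = 0 :=
    Module.finrank_zero_of_subsingleton
  omega

end LinearAlgebra

namespace SimpComplex

section Operators

variable {V : Type*} [LinearOrder V] (k : Type*) [Field k]

/-- The sign with which the vertex `v` is inserted into `G`. -/
def insertSign (v : V) (G : Finset V) : k := (-1) ^ (G.filter (fun w => w < v)).card

theorem insertSign_mul_self (v : V) (G : Finset V) :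
    insertSign k v G * insertSign k v G = 1 := by
  rw [insertSign, ← mul_pow]
  simp

theorem insertSign_insert {u v : V} {G : Finset V} (hu : u ∉ G) :
    insertSign k v (insert u G) = (if u < v then -1 else 1) * insertSign k v G := by
  unfold insertSign
  rw [Finset.filter_insert]
  split
  · rw [Finset.card_insert_of_notMem (by simp [hu]), pow_succ']
  · simp

/-- Contraction of a chain with the vertex `v`. -/
def contract (v : V) : (Finset V → k) →ₗ[k] (Finset V → k) where
  toFun f G := if v ∈ G then 0 else insertSign k v G * f (insert v G)
  map_add' f g := by
    funext G
    by_cases h : v ∈ G <;> simp [h, mul_add]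
  map_smul' a f := by
    funext G
    by_cases h : v ∈ G <;> simp [h, mul_left_comm]

/-- Joining a chain with the vertex `v`. -/
def join (v : V) : (Finset V → k) →ₗ[k] (Finset V → k) where
  toFun f G := if v ∈ G then insertSign k v (G.erase v) * f (G.erase v) else 0
  map_add' f g := by
    funext G
    by_cases h : v ∈ G <;> simp [h, mul_add]
  map_smul' a f := by
    funext G
    by_cases h : v ∈ G <;> simp [h, mul_left_comm]

/-- Restriction of a chain to the faces avoiding the vertex `v`. -/
def avoid (v : V) : (Finset V → k) →ₗ[k] (Finset V → k) where
  toFun f G := if v ∈ G then 0 else f G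
  map_add' f g := by
    funext G
    by_cases h : v ∈ G <;> simp [h]
  map_smul' a f := by
    funext G
    by_cases h : v ∈ G <;> simp [h]

variable {k}

theorem contract_apply (v : V) (f : Finset V → k) (G : Finset V) :
    contract k v f G = if v ∈ G then 0 else insertSign k v G * f (insert v G) := rfl

theorem join_apply (v : V) (f : Finset V → k) (G : Finset V) :
    join k v f G = if v ∈ G then insertSign k v (G.erase v) * f (G.erase v) else 0 := rfl

theorem avoid_apply (v : V) (f : Finset V → k) (G : Finset V) :
    avoid k v f G = if v ∈ G then 0 else f G := rfl

theorem contract_contract_self (v : V) (f : Finset V → k) : contract k v (contract k v f) = 0 := by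
  funext G
  simp [contract_apply]

theorem contract_contract_comm (u v : V) (f : Finset V → k) :
    contract k u (contract k v f) = -contract k v (contract k u f) := by
  rcases eq_or_ne u v with rfl | huv
  · simp [contract_contract_self]
  funext G
  simp only [contract_apply, Pi.neg_apply, Finset.mem_insert]
  by_cases hu : u ∈ G
  · simp [hu]
  by_cases hv : v ∈ G
  · simp [hv]
  rw [insertSign_insert k hu, insertSign_insert k hv, Finset.insert_comm v u G]
  rcases lt_or_gt_of_ne huv with h | h
  · simp [hu, hv, huv, huv.symm, h, h.not_gt]
    ring
  · simp [hu, hv, huv, huv.symm, h, h.not_gt]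
    ring

theorem contract_join (v : V) (f : Finset V → k) : contract k v (join k v f) = avoid k v f := by
  funext G
  by_cases h : v ∈ G
  · simp [contract_apply, avoid_apply, h]
  · simp [contract_apply, avoid_apply, join_apply, h, ← mul_assoc, insertSign_mul_self]

theorem avoid_join (v : V) (f : Finset V → k) : avoid k v (join k v f) = 0 := by
  funext G
  by_cases h : v ∈ G <;> simp [avoid_apply, join_apply, h]

theorem avoid_contract_self (v : V) (f : Finset V → k) :
    avoid k v (contract k v f) = contract k v f := by
  funext G
  by_cases h : v ∈ G <;> simp [avoid_apply, contract_apply, h]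

theorem contract_avoid_self (v : V) (f : Finset V → k) : contract k v (avoid k v f) = 0 := by
  funext G
  simp [avoid_apply, contract_apply]

theorem avoid_contract_of_ne {u v : V} (h : u ≠ v) (f : Finset V → k) :
    avoid k v (contract k u f) = contract k u (avoid k v f) := by
  funext G
  by_cases hv : v ∈ G <;> simp [avoid_apply, contract_apply, hv, h.symm]

/-- A chain is determined by its contraction with `v` and its restriction to the faces
avoiding `v`. -/
theorem ext_contract_avoid {v : V} {f g : Finset V → k} (hc : contract k v f = contract k v g)
    (ha : avoid k v f = avoid k v g) : f = g := by
  funext G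
  by_cases h : v ∈ G
  · have := congrFun hc (G.erase v)
    simp only [contract_apply, Finset.notMem_erase, if_false, Finset.insert_erase h] at this
    have h1 := congrArg (insertSign k v (G.erase v) * ·) this
    simpa [← mul_assoc, insertSign_mul_self] using h1
  · simpa [avoid_apply, h] using congrFun ha G

theorem avoid_eq_self_of_contract_eq_zero {v : V} {f : Finset V → k} (h : contract k v f = 0) :
    avoid k v f = f := by
  refine ext_contract_avoid (v := v) ?_ ?_
  · rw [contract_avoid_self, h]
  · funext G
    by_cases h : v ∈ G <;> simp [avoid_apply, h]

variable [Fintype V] (k)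

/-- The simplicial boundary on chains of the full simplex on `V`. -/
def totalBoundary : (Finset V → k) →ₗ[k] (Finset V → k) := ∑ v, contract k v

variable {k}

theorem totalBoundary_apply (f : Finset V → k) : totalBoundary k f = ∑ v, contract k v f := by
  simp [totalBoundary]

theorem totalBoundary_totalBoundary (f : Finset V → k) :
    totalBoundary k (totalBoundary k f) = 0 := by
  simp only [totalBoundary_apply, map_sum]
  rw [← Finset.sum_product']
  refine Finset.sum_involution (fun p _ => p.swap) ?_ ?_ (by simp) (by simp)
  · intro p _
    simp [contract_contract_comm p.1 p.2]
  · rintro ⟨u, v⟩ _ h h'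
    simp only [Prod.swap_prod_mk, Prod.mk.injEq] at h'
    obtain ⟨rfl, -⟩ := h'
    exact h (contract_contract_self _ _)

theorem contract_totalBoundary (v : V) (f : Finset V → k) :
    contract k v (totalBoundary k f) = -totalBoundary k (contract k v f) := by
  simp only [totalBoundary_apply, map_sum, ← Finset.sum_neg_distrib]
  exact Finset.sum_congr rfl fun u _ => contract_contract_comm v u f

theorem avoid_totalBoundary (v : V) (f : Finset V → k) :
    avoid k v (totalBoundary k f) = contract k v f + totalBoundary k (avoid k v f) := by
  simp only [totalBoundary_apply, map_sum]
  rw [← Finset.add_sum_erase _ _ (Finset.mem_univ v), ← Finset.add_sum_erase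
    (f := fun u => contract k u (avoid k v f)) _ (Finset.mem_univ v), avoid_contract_self,
    contract_avoid_self, zero_add]
  congr 1
  exact Finset.sum_congr rfl fun u hu => avoid_contract_of_ne (Finset.ne_of_mem_erase hu) f

end Operators

section Homology

variable {V : Type*} (k : Type*) [Field k]

/-- The chains of the full simplex supported on the faces of `K` of cardinality `q`. -/
def chainSpace (K : SimpComplex V) (q : ℕ) : Submodule k (Finset V → k) where
  carrier := {f | ∀ F, f F ≠ 0 → F ∈ K.faces ∧ F.card = q}
  add_mem' {f g} hf hg F h := by
    by_cases hF : f F = 0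
    · exact hg F fun hg' => h (by simp [hF, hg'])
    · exact hf F hF
  zero_mem' F h := absurd rfl h
  smul_mem' a f hf F h := hf F fun h' => h (by simp [h'])

open Classical in
/-- Extension of a chain of `K` by zero to a chain of the full simplex. -/
noncomputable def extendChain (K : SimpComplex V) (c : ℕ) : Chains k K c →ₗ[k] (Finset V → k) where
  toFun x F := if h : F ∈ K.faces ∧ F.card = c then x ⟨F, h⟩ else 0
  map_add' x y := by
    funext F
    by_cases h : F ∈ K.faces ∧ F.card = c
    · simp only [Pi.add_apply, dif_pos h]
      rfl
    · simp [h]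
  map_smul' a x := by
    funext F
    by_cases h : F ∈ K.faces ∧ F.card = c
    · simp only [Pi.smul_apply, dif_pos h]
      rfl
    · simp [h]

/-- Restriction of a chain of the full simplex to the faces of `K` of cardinality `c`. -/
def restrictChain (K : SimpComplex V) (c : ℕ) : (Finset V → k) →ₗ[k] Chains k K c where
  toFun f F := f F.1
  map_add' _ _ := rfl
  map_smul' _ _ := rfl

variable {k}

theorem extendChain_mem (K : SimpComplex V) (c : ℕ) (x : Chains k K c) :
    extendChain k K c x ∈ chainSpace k K c := by
  intro F hF
  by_contra h
  exact hF (dif_neg h)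

theorem restrictChain_extendChain (K : SimpComplex V) (c : ℕ) (x : Chains k K c) :
    restrictChain k K c (extendChain k K c x) = x := by
  funext F
  exact dif_pos F.2

theorem extendChain_restrictChain {K : SimpComplex V} {c : ℕ} {f : Finset V → k}
    (hf : f ∈ chainSpace k K c) : extendChain k K c (restrictChain k K c f) = f := by
  funext F
  by_cases h : F ∈ K.faces ∧ F.card = c
  · exact dif_pos h
  · rw [not_imp_comm.1 (hf F) h]
    exact dif_neg h

/-- `D` is the deletion of the vertex `v` from `K`. -/
def IsDeletion (K : SimpComplex V) (v : V) (D : SimpComplex V) : Prop :=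
  ∀ F, F ∈ D.faces ↔ v ∉ F ∧ F ∈ K.faces

variable {K D L : SimpComplex V} {v : V}

theorem chainSpace_mono (h : D.faces ⊆ K.faces) (q : ℕ) : chainSpace k D q ≤ chainSpace k K q :=
  fun _ hf F hF => ⟨h (hf F hF).1, (hf F hF).2⟩

theorem IsDeletion.subset (hD : IsDeletion K v D) : D.faces ⊆ K.faces := fun F hF => ((hD F).1 hF).2

variable [LinearOrder V]

/-- `L` is the link of the vertex `v` in `K`. -/
def IsLink (K : SimpComplex V) (v : V) (L : SimpComplex V) : Prop :=
  ∀ F, F ∈ L.faces ↔ v ∉ F ∧ insert v F ∈ K.faces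

theorem IsLink.subset (hL : IsLink K v L) (hD : IsDeletion K v D) : L.faces ⊆ D.faces :=
  fun F hF => (hD F).2 ⟨((hL F).1 hF).1,
    K.down_closed _ ((hL F).1 hF).2 _ (Finset.subset_insert _ _)⟩

theorem IsDeletion.contract_eq_zero (hD : IsDeletion K v D) {q : ℕ} {f : Finset V → k}
    (hf : f ∈ chainSpace k D q) : contract k v f = 0 := by
  funext G
  by_contra h
  rw [contract_apply] at h
  split_ifs at h
  · exact h rfl
  · exact ((hD _).1 (hf _ (right_ne_zero_of_mul h)).1).1 (Finset.mem_insert_self _ _)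

theorem IsDeletion.avoid_mem (hD : IsDeletion K v D) {q : ℕ} {f : Finset V → k}
    (hf : f ∈ chainSpace k K q) : avoid k v f ∈ chainSpace k D q := by
  intro F hF
  rw [avoid_apply] at hF
  split_ifs at hF with h
  · exact absurd rfl hF
  · exact ⟨(hD F).2 ⟨h, (hf F hF).1⟩, (hf F hF).2⟩

theorem IsLink.contract_mem (hL : IsLink K v L) {q : ℕ} {f : Finset V → k}
    (hf : f ∈ chainSpace k K (q + 1)) : contract k v f ∈ chainSpace k L q := by
  intro F hF
  rw [contract_apply] at hF
  split_ifs at hF with h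
  · exact absurd rfl hF
  · obtain ⟨h₁, h₂⟩ := hf _ (right_ne_zero_of_mul hF)
    rw [Finset.card_insert_of_notMem h] at h₂
    exact ⟨(hL F).2 ⟨h, h₁⟩, by omega⟩

theorem join_mem_chainSpace (hL : ∀ F ∈ L.faces, v ∉ F → insert v F ∈ K.faces) {q : ℕ}
    {f : Finset V → k} (hf : f ∈ chainSpace k L q) : join k v f ∈ chainSpace k K (q + 1) := by
  intro F hF
  rw [join_apply] at hF
  split_ifs at hF with h
  · obtain ⟨h₁, h₂⟩ := hf _ (right_ne_zero_of_mul hF)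
    have h₃ := hL _ h₁ (Finset.notMem_erase v F)
    rw [Finset.insert_erase h] at h₃
    exact ⟨h₃, by rw [← h₂, Finset.card_erase_add_one h]⟩
  · exact absurd rfl hF

theorem IsLink.join_mem (hL : IsLink K v L) {q : ℕ} {f : Finset V → k}
    (hf : f ∈ chainSpace k L q) : join k v f ∈ chainSpace k K (q + 1) :=
  join_mem_chainSpace (fun F hF _ => ((hL F).1 hF).2) hf

variable [Fintype V]

theorem totalBoundary_mem_chainSpace {K : SimpComplex V} {q : ℕ} {f : Finset V → k}
    (hf : f ∈ chainSpace k K (q + 1)) : totalBoundary k f ∈ chainSpace k K q := by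
  rw [totalBoundary_apply]
  refine Submodule.sum_mem _ fun v _ G hG => ?_
  rw [contract_apply] at hG
  split_ifs at hG with hv
  · exact absurd rfl hG
  · obtain ⟨h₁, h₂⟩ := hf _ (right_ne_zero_of_mul hG)
    rw [Finset.card_insert_of_notMem hv] at h₂
    exact ⟨K.down_closed _ h₁ _ (Finset.subset_insert _ _), by omega⟩

variable (k)

/-- The dimension of the homology of `K` at the faces of cardinality `q`, that is, of the
reduced homology in degree `q - 1`. -/
noncomputable def homologyDim (K : SimpComplex V) (q : ℕ) : ℕ :=
  subquotientDim (chainSpace k K q ⊓ LinearMap.ker (totalBoundary k))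
    ((chainSpace k K (q + 1)).map (totalBoundary k))

variable {k}

theorem boundary_eq (K : SimpComplex V) (c : ℕ) (x : Chains k K (c + 1)) :
    boundary k K c x = restrictChain k K c (totalBoundary k (extendChain k K (c + 1) x)) := by
  funext G
  have hterm : ∀ v ∈ Finset.univ \ G.1, contract k v (extendChain k K (c + 1) x) G.1 =
      insertSign k v G.1 * extendChain k K (c + 1) x (insert v G.1) := fun v hv =>
    if_neg (Finset.mem_sdiff.1 hv).2
  have hsum : totalBoundary k (extendChain k K (c + 1) x) G.1 =
      ∑ v ∈ Finset.univ \ G.1, insertSign k v G.1 *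
        extendChain k K (c + 1) x (insert v G.1) := by
    rw [totalBoundary_apply, Finset.sum_apply, ← Finset.sum_congr rfl hterm]
    refine (Finset.sum_subset (Finset.subset_univ _) fun v _ hv => if_pos ?_).symm
    simpa using hv
  refine Eq.trans ?_ hsum.symm
  rw [← Finset.sum_attach]
  refine Finset.sum_congr rfl fun v _ => ?_
  have hcard : (insert v.1 G.1).card = c + 1 := by
    rw [Finset.card_insert_of_notMem (Finset.mem_sdiff.mp v.2).2, G.2.2]
  by_cases h : insert v.1 G.1 ∈ K.faces
  · rw [dif_pos h]
    refine congrArg _ (Eq.symm ?_)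
    exact dif_pos (⟨h, hcard⟩ : _ ∧ _)
  · rw [dif_neg h]
    refine Eq.symm ((congrArg _ (dif_neg fun h' => h h'.1)).trans (mul_zero _))

theorem extendChain_boundary (K : SimpComplex V) (c : ℕ) (x : Chains k K (c + 1)) :
    extendChain k K c (boundary k K c x) = totalBoundary k (extendChain k K (c + 1) x) := by
  rw [boundary_eq, extendChain_restrictChain]
  exact totalBoundary_mem_chainSpace (extendChain_mem _ _ _)

theorem reducedBetti_eq_homologyDim (K : SimpComplex V) (j : ℕ) :
    reducedBetti k K j = homologyDim k K (j + 1) := by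
  have : Finite (Face K (j + 1)) := Subtype.finite
  change subquotientDim (LinearMap.ker (boundary k K j)) (LinearMap.range (boundary k K (j + 1)))
    = _
  apply le_antisymm
  · refine subquotientDim_le_of_surjective (restrictChain k K (j + 1)) ?_ ?_ ?_
    · rintro z ⟨hz, hz'⟩
      rw [LinearMap.mem_ker, boundary_eq, extendChain_restrictChain hz, LinearMap.mem_ker.1 hz',
        map_zero]
    · rintro _ ⟨w, hw, rfl⟩
      refine ⟨restrictChain k K _ w, ?_⟩
      rw [boundary_eq, extendChain_restrictChain hw]
    · intro z hz
      refine ⟨extendChain k K _ z, ⟨extendChain_mem _ _ _, ?_⟩, ?_⟩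
      · change totalBoundary k _ = 0
        rw [← extendChain_boundary, LinearMap.mem_ker.1 hz, map_zero]
      · rw [restrictChain_extendChain, sub_self]
        exact zero_mem _
  · refine subquotientDim_le_of_surjective (extendChain k K (j + 1)) ?_ ?_ ?_
    · refine fun z hz => ⟨extendChain_mem _ _ _, ?_⟩
      change totalBoundary k _ = 0
      rw [← extendChain_boundary, LinearMap.mem_ker.1 hz, map_zero]
    · rintro _ ⟨w, rfl⟩
      exact ⟨extendChain k K _ w, extendChain_mem _ _ _, (extendChain_boundary _ _ _).symm⟩
    · rintro z ⟨hz, hz'⟩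
      refine ⟨restrictChain k K _ z, ?_, ?_⟩
      · rw [LinearMap.mem_ker, boundary_eq, extendChain_restrictChain hz, LinearMap.mem_ker.1 hz',
          map_zero]
      · rw [extendChain_restrictChain hz, sub_self]
        exact zero_mem _

variable (k)

/-- Exactness of `H(K) → H(L) → H(D)`. -/
theorem homologyDim_link_le (hD : IsDeletion K v D) (hL : IsLink K v L) (q : ℕ) :
    homologyDim k L q ≤ homologyDim k K (q + 1) + homologyDim k D q := by
  refine subquotientDim_le_add (contract k v) LinearMap.id ?_ ?_ ?_ ?_ ?_
  · rintro z ⟨hz, hz'⟩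
    refine ⟨hL.contract_mem hz, ?_⟩
    change totalBoundary k _ = 0 at hz' ⊢
    rw [← neg_eq_zero, ← contract_totalBoundary, hz', map_zero]
  · rintro _ ⟨w, hw, rfl⟩
    refine ⟨-contract k v w, neg_mem (hL.contract_mem hw), ?_⟩
    rw [map_neg, contract_totalBoundary]
  · exact fun z hz => ⟨chainSpace_mono (hL.subset hD) q hz.1, hz.2⟩
  · exact fun z hz => Submodule.map_mono (chainSpace_mono (hL.subset hD) _) hz
  · rintro z ⟨hz, hz'⟩ ⟨e, he, hez⟩
    rw [LinearMap.id_apply] at hez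
    have he₀ := hD.contract_eq_zero he
    have hz₀ := hD.contract_eq_zero (chainSpace_mono (hL.subset hD) q hz)
    have hc : contract k v (join k v z - e) = z := by
      rw [map_sub, contract_join, he₀, sub_zero, avoid_eq_self_of_contract_eq_zero hz₀]
    refine ⟨join k v z - e, ⟨sub_mem (hL.join_mem hz) (chainSpace_mono hD.subset _ he), ?_⟩, ?_⟩
    · change totalBoundary k _ = 0 at hz' ⊢
      refine ext_contract_avoid (v := v) ?_ ?_
      · rw [contract_totalBoundary, hc, hz', neg_zero, map_zero]
      · rw [avoid_totalBoundary, hc, map_sub, avoid_join, zero_sub,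
          avoid_eq_self_of_contract_eq_zero he₀, map_neg, hez, add_neg_cancel, map_zero]
    · rw [hc, sub_self]
      exact zero_mem _

/-- Exactness of `H(D) → H(K) → H(L)`. -/
theorem homologyDim_le_deletion_add_link (hD : IsDeletion K v D) (hL : IsLink K v L) (q : ℕ) :
    homologyDim k K (q + 1) ≤ homologyDim k D (q + 1) + homologyDim k L q := by
  refine subquotientDim_le_add LinearMap.id (contract k v) ?_ ?_ ?_ ?_ ?_
  · exact fun z hz => ⟨chainSpace_mono hD.subset _ hz.1, hz.2⟩
  · exact fun z hz => Submodule.map_mono (chainSpace_mono hD.subset _) hz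
  · rintro z ⟨hz, hz'⟩
    refine ⟨hL.contract_mem hz, ?_⟩
    change totalBoundary k _ = 0 at hz' ⊢
    rw [← neg_eq_zero, ← contract_totalBoundary, hz', map_zero]
  · rintro _ ⟨w, hw, rfl⟩
    refine ⟨-contract k v w, neg_mem (hL.contract_mem hw), ?_⟩
    rw [map_neg, contract_totalBoundary]
  · rintro z ⟨hz, hz'⟩ ⟨e, he, hez⟩
    have he₀ := hD.contract_eq_zero (chainSpace_mono (hL.subset hD) _ he)
    have hw : join k v e ∈ chainSpace k K (q + 1 + 1) := hL.join_mem he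
    have hc : contract k v (z + totalBoundary k (join k v e)) = 0 := by
      rw [map_add, contract_totalBoundary, contract_join,
        avoid_eq_self_of_contract_eq_zero he₀, hez, add_neg_cancel]
    refine ⟨z + totalBoundary k (join k v e), ⟨?_, ?_⟩, ?_⟩
    · rw [← avoid_eq_self_of_contract_eq_zero hc]
      exact hD.avoid_mem (add_mem hz (totalBoundary_mem_chainSpace hw))
    · change totalBoundary k _ = 0 at hz' ⊢
      rw [map_add, hz', totalBoundary_totalBoundary, add_zero]
    · refine ⟨-join k v e, neg_mem hw, ?_⟩
      rw [LinearMap.id_apply, map_neg, sub_add_cancel_left]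

/-- Exactness of `H(L) → H(D) → H(K)`. -/
theorem homologyDim_deletion_le (hD : IsDeletion K v D) (hL : IsLink K v L) (q : ℕ) :
    homologyDim k D q ≤ homologyDim k L q + homologyDim k K q := by
  refine subquotientDim_le_add LinearMap.id LinearMap.id ?_ ?_ ?_ ?_ ?_
  · exact fun z hz => ⟨chainSpace_mono (hL.subset hD) _ hz.1, hz.2⟩
  · exact fun z hz => Submodule.map_mono (chainSpace_mono (hL.subset hD) _) hz
  · exact fun z hz => ⟨chainSpace_mono hD.subset _ hz.1, hz.2⟩
  · exact fun z hz => Submodule.map_mono (chainSpace_mono hD.subset _) hz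
  · rintro z ⟨hz, hz'⟩ ⟨e, he, hez⟩
    rw [LinearMap.id_apply] at hez
    have hz₀ := hD.contract_eq_zero hz
    refine ⟨contract k v e, ⟨hL.contract_mem he, ?_⟩, ?_⟩
    · change totalBoundary k _ = 0
      rw [← neg_eq_zero, ← contract_totalBoundary, hez, hz₀]
    · refine ⟨avoid k v e, hD.avoid_mem he, ?_⟩
      rw [LinearMap.id_apply, eq_sub_iff_add_eq', ← avoid_totalBoundary, hez,
        avoid_eq_self_of_contract_eq_zero hz₀]

variable {k}

/-- Cones are acyclic. -/
theorem homologyDim_eq_zero_of_cone (hK : ∀ F ∈ K.faces, insert v F ∈ K.faces) (q : ℕ) :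
    homologyDim k K q = 0 := by
  refine subquotientDim_eq_zero ?_
  rintro z ⟨hz, hz'⟩
  change totalBoundary k _ = 0 at hz'
  have hz₁ : avoid k v z ∈ chainSpace k K q := by
    intro F hF
    rw [avoid_apply] at hF
    split_ifs at hF with h
    · exact absurd rfl hF
    · exact hz F hF
  have hc : contract k v (join k v (avoid k v z)) = avoid k v z := by
    rw [contract_join, avoid_eq_self_of_contract_eq_zero (contract_avoid_self _ _)]
  have hb := avoid_totalBoundary v z
  rw [hz', map_zero] at hb
  refine ⟨join k v (avoid k v z), join_mem_chainSpace (fun F hF _ => hK F hF) hz₁, ?_⟩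
  refine ext_contract_avoid (v := v) ?_ ?_
  · rw [contract_totalBoundary, hc]
    exact (eq_neg_of_add_eq_zero_left hb.symm).symm
  · rw [avoid_totalBoundary, hc, avoid_join, map_zero, add_zero]

/-- The homology of the complex whose only face is empty. -/
theorem homologyDim_singleton_empty (hK : K.faces = {∅}) (q : ℕ) :
    homologyDim k K q = if q = 0 then 1 else 0 := by
  have hzero : ∀ q, q ≠ 0 → chainSpace k K q = ⊥ := by
    intro q hq
    rw [eq_bot_iff]
    intro f hf
    rw [Submodule.mem_bot]
    funext F
    by_contra h
    obtain ⟨h₁, h₂⟩ := hf F h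
    rw [hK, Set.mem_singleton_iff] at h₁
    subst h₁
    exact hq h₂.symm
  split_ifs with hq
  · subst hq
    have hmem : ∀ f : Finset V → k, f ∈ chainSpace k K 0 ↔ ∃ a : k, a • Pi.single ∅ 1 = f := by
      intro f
      constructor
      · intro hf
        refine ⟨f ∅, ?_⟩
        funext F
        by_cases hF : F = ∅
        · simp [hF]
        · have : f F = 0 := by
            by_contra h
            have := (hf F h).1
            rw [hK] at this
            exact hF this
          simp [hF, this]
      · rintro ⟨a, rfl⟩ F hF
        by_cases h : F = ∅
        · simp [h, hK]
        · simp [h] at hF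
    have hZ : chainSpace k K 0 ⊓ LinearMap.ker (totalBoundary k) =
        Submodule.span k {Pi.single ∅ 1} := by
      ext f
      rw [Submodule.mem_inf, hmem, Submodule.mem_span_singleton, and_iff_left_iff_imp]
      rintro ⟨a, rfl⟩
      rw [LinearMap.mem_ker, totalBoundary_apply]
      refine Finset.sum_eq_zero fun v _ => ?_
      funext G
      simp [contract_apply]
    unfold homologyDim subquotientDim
    rw [hZ, hzero (0 + 1) (by omega), Submodule.map_bot, Submodule.comap_bot, Submodule.ker_subtype,
      (Submodule.quotEquivOfEqBot _ rfl).finrank_eq, finrank_span_singleton]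
    simp
  · refine subquotientDim_eq_zero ?_
    rw [hzero q hq, bot_inf_eq]
    exact bot_le

end Homology

section Independence

variable {V : Type*} [LinearOrder V] (G : SimpleGraph V)

/-- The complex of independent sets of the graph `G` contained in `W`. -/
def indepOn (W : Finset V) : SimpComplex V where
  faces := {F | F ⊆ W ∧ ∀ a ∈ F, ∀ b ∈ F, ¬G.Adj a b}
  down_closed := fun _ hF _ hH =>
    ⟨hH.trans hF.1, fun a ha b hb => hF.2 a (hH ha) b (hH hb)⟩

variable {G}

theorem isDeletion_indepOn {v : V} {W : Finset V} (hv : v ∉ W) :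
    IsDeletion (indepOn G (insert v W)) v (indepOn G W) := by
  intro F
  constructor
  · exact fun h => ⟨fun hvF => hv (h.1 hvF), h.1.trans (Finset.subset_insert _ _), h.2⟩
  · exact fun ⟨h, h'⟩ => ⟨(Finset.subset_insert_iff_of_notMem h).1 h'.1, h'.2⟩

theorem isLink_indepOn {v : V} {W W' : Finset V} (hv : v ∉ W)
    (hW' : ∀ w, w ∈ W' ↔ w ∈ W ∧ ¬G.Adj v w) :
    IsLink (indepOn G (insert v W)) v (indepOn G W') := by
  intro F
  constructor
  · refine fun h => ⟨fun hvF => hv ((hW' v).1 (h.1 hvF)).1, ?_, ?_⟩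
    · exact Finset.insert_subset_insert _ fun a ha => ((hW' a).1 (h.1 ha)).1
    · intro a ha b hb
      rw [Finset.mem_insert] at ha hb
      rcases ha with rfl | ha <;> rcases hb with rfl | hb
      · exact G.irrefl
      · exact ((hW' b).1 (h.1 hb)).2
      · exact fun h' => ((hW' a).1 (h.1 ha)).2 h'.symm
      · exact h.2 a ha b hb
  · rintro ⟨hvF, h₁, h₂⟩
    refine ⟨fun a ha => (hW' a).2 ⟨?_, ?_⟩, fun a ha b hb => ?_⟩
    · exact Finset.mem_of_mem_insert_of_ne (h₁ (Finset.mem_insert_of_mem ha))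
        fun h => hvF (h ▸ ha)
    · exact h₂ v (Finset.mem_insert_self _ _) a (Finset.mem_insert_of_mem ha)
    · exact h₂ a (Finset.mem_insert_of_mem ha) b (Finset.mem_insert_of_mem hb)

variable [Fintype V] (k : Type*) [Field k]

theorem homologyDim_indepOn_eq_zero {v : V} {W : Finset V} (hv : v ∈ W)
    (h : ∀ w ∈ W, ¬G.Adj v w) (q : ℕ) : homologyDim k (indepOn G W) q = 0 := by
  refine homologyDim_eq_zero_of_cone (K := indepOn G W) (v := v) (fun F hF => ⟨?_, ?_⟩) q
  · exact Finset.insert_subset hv hF.1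
  · intro a ha b hb
    rw [Finset.mem_insert] at ha hb
    rcases ha with rfl | ha <;> rcases hb with rfl | hb
    · exact G.irrefl
    · exact h b (hF.1 hb)
    · exact fun h' => h a (hF.1 ha) h'.symm
    · exact hF.2 a ha b hb

/-- Removing a vertex whose neighborhood contains that of another, nonadjacent vertex does not
change the homology of the independence complex. -/
theorem homologyDim_indepOn_insert {u v : V} {W : Finset V} (hv : v ∉ W) (hu : u ∈ W)
    (huv : ¬G.Adj v u) (h : ∀ w ∈ W, G.Adj u w → G.Adj v w) (q : ℕ) :
    homologyDim k (indepOn G (insert v W)) (q + 1) = homologyDim k (indepOn G W) (q + 1) := by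
  classical
  have hD := isDeletion_indepOn (G := G) hv
  have hL := isLink_indepOn (G := G) (W' := W.filter fun w => ¬G.Adj v w) hv (by simp)
  have h₀ : ∀ q, homologyDim k (indepOn G (W.filter fun w => ¬G.Adj v w)) q = 0 := by
    refine homologyDim_indepOn_eq_zero k (v := u) (by simp [hu, huv]) fun w hw hw' => ?_
    rw [Finset.mem_filter] at hw
    exact hw.2 (h w hw.1 hw')
  have h₁ := homologyDim_le_deletion_add_link k hD hL q
  have h₂ := homologyDim_deletion_le k hD hL (q + 1)
  rw [h₀] at h₁ h₂
  omega

theorem homologyDim_indepOn_union {u : V} {W : Finset V} (hu : u ∈ W) (A : Finset V)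
    (hAW : Disjoint A W) (huA : ∀ v ∈ A, ¬G.Adj v u)
    (h : ∀ v ∈ A, ∀ w ∈ W, G.Adj u w → G.Adj v w) (q : ℕ) :
    homologyDim k (indepOn G (A ∪ W)) (q + 1) = homologyDim k (indepOn G W) (q + 1) := by
  induction A using Finset.induction_on with
  | empty => rw [Finset.empty_union]
  | insert v A hv ih =>
    rw [Finset.disjoint_insert_left] at hAW
    have hsub := Finset.subset_insert v A
    rw [Finset.insert_union, homologyDim_indepOn_insert k (u := u)]
    · exact ih hAW.2 (fun a ha => huA a (hsub ha))
        fun a ha => h a (hsub ha)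
    · simp [hv, hAW.1]
    · simp [hu]
    · exact huA v (Finset.mem_insert_self _ _)
    · intro w hw huw
      rcases Finset.mem_union.1 hw with hw | hw
      · exact absurd huw.symm (huA w (hsub hw))
      · exact h v (Finset.mem_insert_self _ _) w hw huw

/-- The independence complex of a star with center `u`, together with isolated vertices. -/
theorem homologyDim_indepOn_star {u : V} {W : Finset V} (hu : u ∉ W)
    (hW : ∀ v ∈ W, ∀ w ∈ W, ¬G.Adj v w) {p : Prop} [Decidable p]
    (hp : (∀ w ∈ W, G.Adj u w) ↔ p) (q : ℕ) :
    homologyDim k (indepOn G (insert u W)) (q + 1) =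
      if p ∧ W.card ≠ 0 ∧ q = 0 then 1 else 0 := by
  rcases W.eq_empty_or_nonempty with rfl | ⟨w, hw⟩
  · rw [homologyDim_indepOn_eq_zero k (v := u) (by simp) (by simp)]
    simp
  by_cases hall : ∀ w ∈ W, G.Adj u w
  · have hD := isDeletion_indepOn (G := G) hu
    have hL := isLink_indepOn (G := G) (W' := ∅) hu (by simpa using hall)
    have h₀ := fun q => homologyDim_indepOn_eq_zero k hw (hW w hw) q
    have h₁ := homologyDim_le_deletion_add_link k hD hL q
    have h₂ := homologyDim_link_le k hD hL q
    have h₃ := homologyDim_singleton_empty (k := k) (K := indepOn G ∅) (by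
      ext F
      simp only [indepOn, Finset.subset_empty, Set.mem_ofPred_eq, Set.mem_singleton_iff]
      exact ⟨fun h => h.1, fun h => ⟨h, by simp [h]⟩⟩) q
    rw [h₀, h₃] at h₁ h₂
    have hcard : W.card ≠ 0 := Finset.card_ne_zero_of_mem hw
    simp only [hp.1 hall, hcard, ne_eq, not_false_eq_true, true_and]
    omega
  · rw [if_neg (by tauto)]
    push Not at hall
    obtain ⟨v, hv, huv⟩ := hall
    refine homologyDim_indepOn_eq_zero k (Finset.mem_insert_of_mem hv) (fun a ha => ?_) _
    rcases Finset.mem_insert.1 ha with rfl | ha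
    · exact fun h => huv h.symm
    · exact hW v hv a ha

end Independence

end SimpComplex

section Bipartite

variable {n m : ℕ}

theorem xVert_injective : Function.Injective (xVert : Fin n → Fin (n + m)) :=
  Fin.castAdd_injective n m

theorem yVert_injective : Function.Injective (yVert : Fin m → Fin (n + m)) :=
  Fin.natAdd_injective m n

theorem xVert_ne_yVert (i : Fin n) (j : Fin m) : xVert i ≠ yVert j := by
  intro h
  have := congrArg Fin.val h
  simp only [xVert, yVert, Fin.val_castAdd, Fin.val_natAdd] at this
  omega

theorem xVert_mem_vset {X : Finset (Fin n)} {Y : Finset (Fin m)} {i : Fin n} :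
    xVert i ∈ vset X Y ↔ i ∈ X := by
  simp [vset, xVert_injective.eq_iff, (xVert_ne_yVert _ _).symm]

theorem yVert_mem_vset {X : Finset (Fin n)} {Y : Finset (Fin m)} {j : Fin m} :
    yVert j ∈ vset X Y ↔ j ∈ Y := by
  simp [vset, yVert_injective.eq_iff, xVert_ne_yVert]

theorem mem_vset_iff {X : Finset (Fin n)} {Y : Finset (Fin m)} {a : Fin (n + m)} :
    a ∈ vset X Y ↔ (∃ i ∈ X, xVert i = a) ∨ ∃ j ∈ Y, yVert j = a := by
  simp [vset]

theorem card_vset (X : Finset (Fin n)) (Y : Finset (Fin m)) :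
    (vset X Y).card = X.card + Y.card := by
  rw [vset, Finset.card_union_of_disjoint, Finset.card_image_of_injective _ xVert_injective,
    Finset.card_image_of_injective _ yVert_injective]
  rw [Finset.disjoint_left]
  simp only [Finset.mem_image, not_exists, not_and]
  rintro _ ⟨i, _, rfl⟩ j _
  exact (xVert_ne_yVert i j).symm

/-- The bipartite graph on `X ⊔ Y` with edge set `E`. -/
def bipartiteGraph (E : Finset (Fin n × Fin m)) : SimpleGraph (Fin (n + m)) where
  Adj a b := ∃ p ∈ E, (xVert p.1 = a ∧ yVert p.2 = b) ∨ (xVert p.1 = b ∧ yVert p.2 = a)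
  symm := ⟨fun _ _ ⟨p, hp, h⟩ => ⟨p, hp, h.symm⟩⟩
  loopless := ⟨by
    rintro a ⟨p, -, ⟨h, h'⟩ | ⟨h, h'⟩⟩ <;> exact xVert_ne_yVert _ _ (h.trans h'.symm)⟩

variable {E : Finset (Fin n × Fin m)}

theorem bipartiteGraph_adj_xVert_yVert {i : Fin n} {j : Fin m} :
    (bipartiteGraph E).Adj (xVert i) (yVert j) ↔ j ∈ nbr E i := by
  simp [bipartiteGraph, nbr, xVert_injective.eq_iff, yVert_injective.eq_iff, xVert_ne_yVert]

theorem not_bipartiteGraph_adj_xVert_xVert (i i' : Fin n) :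
    ¬(bipartiteGraph E).Adj (xVert i) (xVert i') := by
  simp [bipartiteGraph, (xVert_ne_yVert _ _).symm]

theorem not_bipartiteGraph_adj_yVert_yVert (j j' : Fin m) :
    ¬(bipartiteGraph E).Adj (yVert j) (yVert j') := by
  simp [bipartiteGraph, xVert_ne_yVert]

theorem induced_indepComplex_eq (W : Finset (Fin (n + m))) :
    (indepComplex E).induced W = indepOn (bipartiteGraph E) W := by
  have : ((indepComplex E).induced W).faces = (indepOn (bipartiteGraph E) W).faces := by
    ext F
    constructor
    · rintro ⟨h, hW⟩
      refine ⟨hW, ?_⟩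
      rintro a ha b hb ⟨p, hp, ⟨rfl, rfl⟩ | ⟨rfl, rfl⟩⟩
      · exact h p hp ⟨ha, hb⟩
      · exact h p hp ⟨hb, ha⟩
    · rintro ⟨hW, h⟩
      exact ⟨fun p hp hF => h _ hF.1 _ hF.2 ⟨p, hp, Or.inl ⟨rfl, rfl⟩⟩, hW⟩
  unfold indepOn SimpComplex.induced at *
  simpa using this

variable (k : Type*) [Field k]

/-- The dimension of the reduced homology of the independence complex on `X ⊔ Y` in degree
`|Y| + N - (i + 2)`. -/
noncomputable def shiftedBetti (E : Finset (Fin n × Fin m)) (N i : ℕ) (X : Finset (Fin n))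
    (Y : Finset (Fin m)) : ℕ :=
  if i + 2 ≤ Y.card + N then
    homologyDim k (indepOn (bipartiteGraph E) (vset X Y)) (Y.card + N - (i + 2) + 1) else 0

theorem bettiFine_indepComplex (i : ℕ) (X : Finset (Fin n)) (Y : Finset (Fin m)) :
    bettiFine k (indepComplex E) i (vset X Y) = shiftedBetti k E X.card i X Y := by
  unfold bettiFine shiftedBetti
  rw [card_vset, add_comm X.card, reducedBetti_eq_homologyDim, induced_indepComplex_eq,
    Nat.sub_sub]

/-- Trading a vertex `y` for the vertices not adjacent to it. -/
theorem shiftedBetti_link_le (N i : ℕ) (X : Finset (Fin n)) {Y : Finset (Fin m)} {y : Fin m}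
    (hy : y ∉ Y) :
    shiftedBetti k E N i (X.filter fun x => y ∉ nbr E x) Y ≤
      shiftedBetti k E N i X Y + shiftedBetti k E N i X (insert y Y) := by
  unfold shiftedBetti
  rw [Finset.card_insert_of_notMem hy]
  split_ifs with h₁ h₂
  · have hy' : (yVert y : Fin (n + m)) ∉ vset X Y := by rwa [yVert_mem_vset]
    have hins : vset X (insert y Y) = insert (yVert y) (vset X Y) := by
      ext a
      simp only [mem_vset_iff, Finset.mem_insert]
      aesop
    have hL := isLink_indepOn (G := bipartiteGraph E)
      (W' := vset (X.filter fun x => y ∉ nbr E x) Y) hy' (by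
        intro a
        constructor
        · intro ha
          rcases mem_vset_iff.1 ha with ⟨i, hi, rfl⟩ | ⟨j, hj, rfl⟩
          · rw [Finset.mem_filter] at hi
            rw [xVert_mem_vset, SimpleGraph.adj_comm, bipartiteGraph_adj_xVert_yVert]
            exact hi
          · exact ⟨yVert_mem_vset.2 hj, not_bipartiteGraph_adj_yVert_yVert _ _⟩
        · rintro ⟨ha, hya⟩
          rcases mem_vset_iff.1 ha with ⟨i, hi, rfl⟩ | ⟨j, hj, rfl⟩
          · rw [SimpleGraph.adj_comm, bipartiteGraph_adj_xVert_yVert] at hya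
            rw [xVert_mem_vset, Finset.mem_filter]
            exact ⟨hi, hya⟩
          · exact yVert_mem_vset.2 hj)
    have h := homologyDim_link_le k (isDeletion_indepOn (G := bipartiteGraph E) hy') hL
      (Y.card + N - (i + 2) + 1)
    rw [hins, show Y.card + 1 + N - (i + 2) + 1 = Y.card + N - (i + 2) + 1 + 1 by omega]
    omega
  · omega
  · exact Nat.zero_le _
  · exact Nat.zero_le _

theorem sum_shiftedBetti_le (N i : ℕ) (X : Finset (Fin n)) (Z T : Finset (Fin m))
    (hT : Disjoint T Z) :
    ∑ Y ∈ Z.powerset, shiftedBetti k E N i (X.filter fun x => Disjoint (nbr E x) T) Y ≤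
      ∑ Y ∈ (T ∪ Z).powerset, shiftedBetti k E N i X Y := by
  induction T using Finset.induction_on generalizing X with
  | empty => simp
  | insert y T hy ih =>
    rw [Finset.disjoint_insert_left] at hT
    have hyTZ : y ∉ T ∪ Z := by simp [hy, hT.1]
    have hX : X.filter (fun x => Disjoint (nbr E x) (insert y T)) =
        (X.filter fun x => y ∉ nbr E x).filter fun x => Disjoint (nbr E x) T := by
      ext x
      simp only [Finset.mem_filter, Finset.disjoint_insert_right]
      tauto
    rw [hX, Finset.insert_union, Finset.sum_powerset_insert hyTZ, ← Finset.sum_add_distrib]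
    refine (ih _ hT.2).trans (Finset.sum_le_sum fun Y hY => ?_)
    exact shiftedBetti_link_le k N i X fun h => hyTZ (Finset.mem_powerset.1 hY h)

/-- If the neighborhood of `x₀` within `Y` is contained in those of the other vertices in `X`,
the homology on `X ⊔ Y` is that of a star. -/
theorem shiftedBetti_of_forall_subset (N i : ℕ) {X : Finset (Fin n)} {Y : Finset (Fin m)}
    {x₀ : Fin n} (hx₀ : x₀ ∈ X) (h : ∀ x ∈ X, ∀ y ∈ Y, y ∈ nbr E x₀ → y ∈ nbr E x) :
    shiftedBetti k E N i X Y =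
      if Y ⊆ nbr E x₀ then (if Y.card ≠ 0 ∧ Y.card + N = i + 2 then 1 else 0) else 0 := by
  classical
  have hvset : vset X Y =
      (X.erase x₀).image xVert ∪ insert (xVert x₀) (Y.image yVert) := by
    rw [Finset.union_insert, ← Finset.insert_union, ← Finset.image_insert, Finset.insert_erase hx₀,
      vset]
  have hsubset : (∀ w ∈ Y.image yVert, (bipartiteGraph E).Adj (xVert x₀) w) ↔ Y ⊆ nbr E x₀ := by
    simp only [Finset.mem_image, forall_exists_index, and_imp, forall_apply_eq_imp_iff₂,
      bipartiteGraph_adj_xVert_yVert]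
    rfl
  unfold shiftedBetti
  rw [hvset, homologyDim_indepOn_union k (u := xVert x₀), homologyDim_indepOn_star k ?_ ?_ hsubset,
    Finset.card_image_of_injective _ yVert_injective]
  · by_cases h₁ : Y ⊆ nbr E x₀
    · simp only [h₁, true_and, if_true]
      split_ifs <;> omega
    · simp [h₁]
  · simp [(xVert_ne_yVert _ _).symm]
  · simp [not_bipartiteGraph_adj_yVert_yVert]
  · exact Finset.mem_insert_self _ _
  · rw [Finset.disjoint_left]
    rw [Finset.forall_mem_image]
    intro x hx
    simp [xVert_injective.eq_iff, (xVert_ne_yVert _ _).symm, Finset.ne_of_mem_erase hx]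
  · rw [Finset.forall_mem_image]
    exact fun x _ => not_bipartiteGraph_adj_xVert_xVert x x₀
  · simp only [Finset.mem_image, Finset.mem_insert, forall_exists_index, and_imp,
      forall_apply_eq_imp_iff₂, forall_eq_or_imp, bipartiteGraph_adj_xVert_yVert]
    exact fun x hx => ⟨fun h => absurd h (SimpleGraph.irrefl _),
      h x (Finset.mem_of_mem_erase hx)⟩

theorem nbr_ferrers (x : Fin n) :
    nbr (ferrers E) x = Finset.univ.filter fun j : Fin m => (j : ℕ) < degG E x := by
  ext j
  simp [nbr, ferrers]

theorem card_nbr_ferrers (x : Fin n) : (nbr (ferrers E) x).card = (nbr E x).card := by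
  have hle : (nbr E x).card ≤ m := by simpa using Finset.card_le_univ (nbr E x)
  rw [nbr_ferrers, degG, Fin.card_filter_val_lt, min_eq_right hle]

theorem sum_powerset_congr_card {α : Type*} {S T : Finset α} (h : S.card = T.card) (f : ℕ → ℕ) :
    ∑ Y ∈ S.powerset, f Y.card = ∑ Y ∈ T.powerset, f Y.card := by
  rw [Finset.sum_powerset_apply_card, Finset.sum_powerset_apply_card, h]

theorem bettiCoarse_ferrers_le {X : Finset (Fin n)} (hX : X.Nonempty) (i : ℕ) :
    bettiCoarse k (ferrers E) i X ≤ bettiCoarse k E i X := by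
  obtain ⟨x₀, hx₀, hmin⟩ := Finset.exists_min_image X (fun x => (nbr E x).card) hX
  unfold bettiCoarse
  simp only [bettiFine_indepComplex]
  let f : ℕ → ℕ := fun c => if c ≠ 0 ∧ c + X.card = i + 2 then 1 else 0
  have hleft : ∑ Y, shiftedBetti k (ferrers E) X.card i X Y =
      ∑ Y ∈ (nbr (ferrers E) x₀).powerset, f Y.card := by
    rw [← Finset.filter_subset_univ, Finset.sum_filter]
    refine Finset.sum_congr rfl fun Y _ => shiftedBetti_of_forall_subset k _ i hx₀ ?_
    intro x hx y _ hy
    rw [nbr_ferrers, Finset.mem_filter] at hy ⊢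
    exact ⟨hy.1, hy.2.trans_le (hmin x hx)⟩
  rw [hleft, sum_powerset_congr_card (card_nbr_ferrers x₀)]
  have hright := sum_shiftedBetti_le (E := E) k X.card i X (nbr E x₀) (nbr E x₀)ᶜ
    disjoint_compl_left
  rw [Finset.union_comm, Finset.union_compl, Finset.powerset_univ] at hright
  refine le_trans (le_of_eq (Finset.sum_congr rfl fun Y hY => ?_)) hright
  rw [shiftedBetti_of_forall_subset k _ i (x₀ := x₀), if_pos (Finset.mem_powerset.1 hY)]
  · exact Finset.mem_filter.2 ⟨hx₀, disjoint_compl_right⟩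
  · intro x hx y _ hy
    rw [Finset.mem_filter, disjoint_compl_right_iff] at hx
    rwa [Finset.eq_of_subset_of_card_le hx.2 (hmin x hx.1)]

theorem bettiCoarse_empty (i : ℕ) : bettiCoarse k E i ∅ = 0 := by
  refine Finset.sum_eq_zero fun Y _ => ?_
  rw [bettiFine_indepComplex, shiftedBetti]
  split_ifs with h
  · rw [Finset.card_empty] at h
    obtain ⟨y, hy⟩ := Finset.card_pos.1 (show 0 < Y.card by omega)
    refine homologyDim_indepOn_eq_zero k (v := yVert y) (yVert_mem_vset.2 hy) (fun w hw => ?_) _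
    rcases mem_vset_iff.1 hw with ⟨x, hx, rfl⟩ | ⟨j, _, rfl⟩
    · simp at hx
    · exact not_bipartiteGraph_adj_yVert_yVert _ _
  · rfl

end Bipartite

/-- **Theorem 1.1 (the Nagel–Reiner conjecture).**  Let `G` be a bipartite
graph on `X ⊔ Y` with edge ideal `I`, and let `J` be the edge ideal of the
Ferrers graph `H` associated with `G`.  Then for every `X' ⊆ X` and every
`i ≥ 0`, the `ℤⁿ`-graded Betti numbers satisfy
`β_{i,X',•}(I) ≥ β_{i,X',•}(J)`. -/
theorem betti_edge_ideal_ge_betti_ferrers (k : Type*) [Field k] (n m : ℕ)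
    (E : Finset (Fin n × Fin m)) (X' : Finset (Fin n)) (i : ℕ) :
    bettiCoarse k (ferrers E) i X' ≤ bettiCoarse k E i X' := by
  rcases X'.eq_empty_or_nonempty with rfl | hX
  · rw [bettiCoarse_empty, bettiCoarse_empty]
  · exact bettiCoarse_ferrers_le k hX i
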